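/- Let α ∈ ℝⁿ with no coordinate in πℤ, β ∈ (0,n), and f a Schwartz function. Then I_β^α f = F_{-α}( u ↦ (2π)^{-β} |ũ|^{-β} F_α(f)(u) ) as tempered distributions, where ũ = (u₁ csc α₁,...,uₙ csc αₙ). -/

import Mathlib

open MeasureTheory Real SchwartzMap Filter
open scoped FourierTransform

noncomputable section

abbrev Rn (n : ℕ) := EuclideanSpace ℝ (Fin n)

/-- The chirp function `e_α(x) = exp(2πi Σₖ (cot αₖ / 2) xₖ²)`. -/
def chirp {n : ℕ} (α : Rn n) (x : Rn n) : ℂ :=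
  Complex.exp (2 * (π : ℂ) * Complex.I *
    ((∑ k, Real.cot (α k) / 2 * (x k) ^ 2 : ℝ) : ℂ))

/-- The constant `c(α) = ∏ₖ √(1 - i cot αₖ)`. -/
def cConst {n : ℕ} (α : Rn n) : ℂ :=
  ∏ k, (1 - Complex.I * (Real.cot (α k) : ℂ)) ^ ((1 : ℂ) / 2)

/-- The FRFT kernel `K_α(x,u)`. -/
def frftKernel {n : ℕ} (α : Rn n) (x u : Rn n) : ℂ :=
  ∏ k, (1 - Complex.I * (Real.cot (α k) : ℂ)) ^ ((1 : ℂ) / 2) *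
    Complex.exp (2 * (π : ℂ) * Complex.I *
      ((Real.cot (α k) / 2 * ((x k) ^ 2 + (u k) ^ 2)
        - x k * u k / Real.sin (α k) : ℝ) : ℂ))

/-- The multidimensional fractional Fourier transform. -/
def frft {n : ℕ} (α : Rn n) (f : Rn n → ℂ) (u : Rn n) : ℂ :=
  ∫ x, f x * frftKernel α x u

/-- `ũ = (u₁ csc α₁, ..., uₙ csc αₙ)`. -/
def tilde {n : ℕ} (α u : Rn n) : Rn n :=
  (EuclideanSpace.equiv (Fin n) ℝ).symm fun k => u k / Real.sin (α k)

/-- `γ(β) = π^{n/2} 2^β Γ(β/2) / Γ((n-β)/2)`. -/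
def gammaC (n : ℕ) (β : ℝ) : ℝ :=
  π ^ ((n : ℝ) / 2) * 2 ^ β * Real.Gamma (β / 2) / Real.Gamma (((n : ℝ) - β) / 2)

/-- The classical Riesz potential `I_β`. -/
def rieszPot (n : ℕ) (β : ℝ) (f : Rn n → ℂ) (x : Rn n) : ℂ :=
  ((1 / gammaC n β : ℝ) : ℂ) * ∫ y, f y / ((‖x - y‖ ^ ((n : ℝ) - β) : ℝ) : ℂ)

/-- The fractional Riesz potential related to chirp functions `I_β^α`. -/
def rieszPotChirp {n : ℕ} (α : Rn n) (β : ℝ) (f : Rn n → ℂ) (x : Rn n) : ℂ :=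
  ((1 / gammaC n β : ℝ) : ℂ) * chirp (-α) x *
    ∫ y, f y * chirp α y / ((‖x - y‖ ^ ((n : ℝ) - β) : ℝ) : ℂ)

/-- `c_n = Γ((n+1)/2)/π^{(n+1)/2}`. -/
def nConst (n : ℕ) : ℝ := Real.Gamma (((n : ℝ) + 1) / 2) / π ^ (((n : ℝ) + 1) / 2)

/-- The j-th fractional Riesz transform related to chirp functions (principal value). -/
def rieszTransChirp {n : ℕ} (α : Rn n) (j : Fin n) (f : Rn n → ℂ) (x : Rn n) : ℂ :=
  ((nConst n : ℝ) : ℂ) * chirp (-α) x *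
    limUnder (nhdsWithin (0 : ℝ) (Set.Ioi 0)) fun ε =>
      ∫ y in {y : Rn n | ε < dist x y},
        (((x j - y j) / ‖x - y‖ ^ ((n : ℝ) + 1) : ℝ) : ℂ) * f y * chirp α y

/-- Partial derivative in the k-th coordinate direction. -/
def partialD {n : ℕ} (k : Fin n) (g : Rn n → ℂ) (y : Rn n) : ℂ :=
  fderiv ℝ g y (EuclideanSpace.single k 1)

/-- `α` has no coordinate in `πℤ`. -/
def notPiZ {n : ℕ} (α : Rn n) : Prop := ∀ k, ∀ m : ℤ, α k ≠ m * π

/-!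
Integrating the Gaussians `exp (-π t ‖y‖²)` against `t ^ (a / 2 - 1) dt` produces a multiple of
`‖y‖ ^ (-a)`. The Fourier transform takes the Gaussian of parameter `t` to a multiple of the one of
parameter `t⁻¹`, so the substitution `t ↦ t⁻¹` shows that the Riesz potential is the Fourier
multiplier with symbol `(2π‖ξ‖) ^ (-β)`. Since
`F_α f (u) = c(α) e_α(u) 𝓕 (e_α f) (ũ)`, multiplying by chirps carries this over to `I_β^α` and
`F_α`; the dilations contribute the Jacobian `∏ |sin αₖ|`, which `c(α) c(-α)` cancels.
-/

open Module Metric Set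
open scoped ENNReal RealInnerProductSpace ContDiff

section GaussianSubordination

variable {V E : Type*} [NormedAddCommGroup V] [NormedSpace ℝ V] [FiniteDimensional ℝ V]
  [MeasurableSpace V] [BorelSpace V] {μ : Measure V} [μ.IsAddHaarMeasure]
  [NormedAddCommGroup E] [NormedSpace ℝ E]

lemma integrable_norm_rpow_neg_smul {f : V → E} (hf : Integrable f μ) (hf_top : MemLp f ∞ μ)
    {a : ℝ} (ha : 0 ≤ a) (had : a < finrank ℝ V) :
    Integrable (fun y ↦ ‖y‖ ^ (-a) • f y) μ := by
  have hmeas : AEStronglyMeasurable (fun y : V ↦ ‖y‖ ^ (-a)) μ :=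
    (by fun_prop : Measurable fun y : V ↦ ‖y‖ ^ (-a)).aestronglyMeasurable
  have hnorm (y : V) : ‖‖y‖ ^ (-a)‖ = ‖y‖ ^ (-a) := Real.norm_of_nonneg (by positivity)
  have near : IntegrableOn (fun y ↦ ‖y‖ ^ (-a) • f y) (ball 0 1) μ := by
    have hdim : 1 ≤ finrank ℝ V := by exact_mod_cast ha.trans_lt had
    have hball : IntegrableOn (fun y : V ↦ ‖y‖ ^ (-a)) (ball 0 1) μ :=
      integrableOn_ball_of_norm_le_rpow (C := 1) hdim had
        (.of_forall fun y ↦ by rw [hnorm, one_mul]) hmeas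
    exact hball.smul_of_top_left (hf_top.restrict _)
  have far : IntegrableOn (fun y ↦ ‖y‖ ^ (-a) • f y) (ball 0 1)ᶜ μ := by
    refine hf.integrableOn.bdd_smul 1 hmeas.restrict ?_
    refine ae_restrict_of_forall_mem measurableSet_ball.compl fun y hy ↦ ?_
    rw [hnorm]
    exact rpow_le_one_of_one_le_of_nonpos (by simpa using hy) (by linarith)
  rw [← integrableOn_univ, ← union_compl_self (ball (0 : V) 1)]
  exact near.union far

lemma integral_rpow_mul_exp_neg_pi_mul_sq {a r : ℝ} (ha : 0 < a) (hr : 0 < r) :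
    ∫ t in Ioi (0 : ℝ), t ^ (a / 2 - 1) * exp (-(π * r ^ 2 * t)) =
      Gamma (a / 2) * π ^ (-(a / 2)) * r ^ (-a) := by
  rw [integral_rpow_mul_exp_neg_mul_Ioi (half_pos ha) (by positivity), one_div,
    inv_rpow (by positivity), ← rpow_neg (by positivity), mul_rpow (by positivity) (by positivity),
    ← rpow_natCast_mul hr.le]
  push_cast
  ring_nf

lemma integrableOn_rpow_mul_exp_neg_pi_mul_sq {a r : ℝ} (ha : 0 < a) (hr : 0 < r) :
    IntegrableOn (fun t ↦ t ^ (a / 2 - 1) * exp (-(π * r ^ 2 * t))) (Ioi 0) := by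
  simpa using integrableOn_rpow_mul_exp_neg_mul_rpow (s := a / 2 - 1) (by linarith) one_pos
    (by positivity : 0 < π * r ^ 2)

lemma ae_norm_pos_of_finrank_pos (hV : 0 < finrank ℝ V) : ∀ᵐ y ∂μ, 0 < ‖y‖ := by
  have := nontrivial_of_finrank_pos hV
  filter_upwards [μ.ae_ne 0] with y hy using norm_pos_iff.2 hy

lemma integrable_rpow_mul_exp_neg_pi_norm_sq_smul {f : V → E} (hf : Integrable f μ)
    (hf_top : MemLp f ∞ μ) {a : ℝ} (ha : 0 < a) (had : a < finrank ℝ V) :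
    Integrable (Function.uncurry fun y t ↦ (t ^ (a / 2 - 1) * exp (-(π * ‖y‖ ^ 2 * t))) • f y)
      (μ.prod (volume.restrict (Ioi (0 : ℝ)))) := by
  have hpos : ∀ᵐ y ∂μ, 0 < ‖y‖ := ae_norm_pos_of_finrank_pos (by exact_mod_cast ha.trans had)
  refine (integrable_prod_iff ?_).2 ⟨?_, ?_⟩
  · exact (Measurable.aestronglyMeasurable (by fun_prop)).smul hf.1.comp_fst
  · filter_upwards [hpos] with y hy
    exact (integrableOn_rpow_mul_exp_neg_pi_mul_sq ha hy).smul_const (f y)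
  · refine ((integrable_norm_rpow_neg_smul hf hf_top ha.le had).norm.const_mul
      (Gamma (a / 2) * π ^ (-(a / 2)))).congr ?_
    filter_upwards [hpos] with y hy
    have hnorm : ∀ t ∈ Ioi (0 : ℝ), ‖(t ^ (a / 2 - 1) * exp (-(π * ‖y‖ ^ 2 * t))) • f y‖ =
        t ^ (a / 2 - 1) * exp (-(π * ‖y‖ ^ 2 * t)) * ‖f y‖ := fun t (ht : 0 < t) ↦ by
      rw [norm_smul, Real.norm_of_nonneg (by positivity)]
    simp only [Function.uncurry_apply_pair]
    rw [setIntegral_congr_fun measurableSet_Ioi hnorm, integral_mul_const,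
      integral_rpow_mul_exp_neg_pi_mul_sq ha hy, norm_smul, Real.norm_of_nonneg (by positivity),
      ← mul_assoc]

lemma integral_rpow_smul_integral_gaussian_smul [CompleteSpace E] {f : V → E}
    (hf : Integrable f μ) (hf_top : MemLp f ∞ μ) {a : ℝ} (ha : 0 < a) (had : a < finrank ℝ V) :
    ∫ t in Ioi (0 : ℝ), t ^ (a / 2 - 1) • ∫ y, exp (-(π * ‖y‖ ^ 2 * t)) • f y ∂μ =
      (Gamma (a / 2) * π ^ (-(a / 2))) • ∫ y, ‖y‖ ^ (-a) • f y ∂μ := by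
  calc
    _ = ∫ t in Ioi (0 : ℝ), ∫ y, (t ^ (a / 2 - 1) * exp (-(π * ‖y‖ ^ 2 * t))) • f y ∂μ := by
      simp_rw [mul_smul, integral_smul]
    _ = ∫ y, (∫ t in Ioi (0 : ℝ), (t ^ (a / 2 - 1) * exp (-(π * ‖y‖ ^ 2 * t))) • f y) ∂μ :=
      (integral_integral_swap
        (integrable_rpow_mul_exp_neg_pi_norm_sq_smul hf hf_top ha had)).symm
    _ = ∫ y, (Gamma (a / 2) * π ^ (-(a / 2))) • ‖y‖ ^ (-a) • f y ∂μ := by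
      refine integral_congr_ae ?_
      filter_upwards [ae_norm_pos_of_finrank_pos (by exact_mod_cast ha.trans had)] with y hy
      rw [integral_smul_const, integral_rpow_mul_exp_neg_pi_mul_sq ha hy, mul_smul]
    _ = _ := integral_smul _ _

end GaussianSubordination

section FourierL1

variable {V E : Type*} [NormedAddCommGroup V] [InnerProductSpace ℝ V] [FiniteDimensional ℝ V]
  [MeasurableSpace V] [BorelSpace V] [NormedAddCommGroup E] [NormedSpace ℂ E]

lemma memLp_top_fourier {f : V → E} (hf : Integrable f) : MemLp (𝓕 f) ∞ :=
  memLp_top_of_bound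
    (VectorFourier.fourierIntegral_continuous continuous_fourierChar continuous_inner
      hf).aestronglyMeasurable
    (∫ v, ‖f v‖) (.of_forall fun _ ↦ VectorFourier.norm_fourierIntegral_le_integral_norm ..)

lemma memLp_top_fourierInv {f : V → E} (hf : Integrable f) : MemLp (𝓕⁻ f) ∞ := by
  rw [fourierInv_eq_fourier_comp_neg]
  exact memLp_top_fourier hf.comp_neg

lemma fourier_comp_add_right (f : V → E) (x ξ : V) :
    𝓕 (fun v ↦ f (v + x)) ξ = 𝐞 ⟪x, ξ⟫ • 𝓕 f ξ :=
  congrFun (VectorFourier.fourierIntegral_comp_add_right 𝐞 volume (innerₗ V) f x) ξ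

variable [CompleteSpace E]

lemma integral_fourier_smul_eq_integral_smul_fourier {φ : V → ℂ} {f : V → E}
    (hφ : Integrable φ) (hf : Integrable f) : ∫ ξ, 𝓕 φ ξ • f ξ = ∫ x, φ x • 𝓕 f x := by
  simpa using! VectorFourier.integral_fourierIntegral_smul_eq_flip (L := innerₗ V)
    continuous_fourierChar continuous_inner hφ hf

lemma integral_fourierInv_smul_eq_integral_smul_fourierInv {φ : V → ℂ} {f : V → E}
    (hφ : Integrable φ) (hf : Integrable f) : ∫ ξ, 𝓕⁻ φ ξ • f ξ = ∫ x, φ x • 𝓕⁻ f x := by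
  simp_rw [fourierInv_eq_fourier_comp_neg φ,
    integral_fourier_smul_eq_integral_smul_fourier hφ.comp_neg hf, fourierInv_eq_fourier_neg f]
  simpa using integral_neg_eq_self (fun x ↦ φ x • 𝓕 f (-x)) volume

lemma fourierInv_fourier_ae_eq {f : V → E} (hf : Integrable f) (hf' : Integrable (𝓕 f)) :
    𝓕⁻ (𝓕 f) =ᵐ[volume] f := by
  refine ae_eq_of_integral_contDiff_smul_eq
    ((memLp_top_fourierInv hf').locallyIntegrable le_top) hf.locallyIntegrable
    fun g hg hg_supp ↦ ?_
  let φ : 𝓢(V, ℂ) := (hg_supp.comp_left (g := Complex.ofReal) rfl).toSchwartzMap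
    (Complex.ofRealCLM.contDiff.comp hg)
  have hφ (x : V) (c : E) : φ x • c = g x • c := Complex.coe_smul (g x) c
  calc
    ∫ x, g x • 𝓕⁻ (𝓕 f) x = ∫ x, φ x • 𝓕⁻ (𝓕 f) x := by simp only [hφ]
    _ = ∫ ξ, 𝓕⁻ (φ : V → ℂ) ξ • 𝓕 f ξ :=
      (integral_fourierInv_smul_eq_integral_smul_fourierInv φ.integrable hf').symm
    _ = ∫ ξ, (𝓕⁻ φ) ξ • 𝓕 f ξ := by rw [SchwartzMap.fourierInv_coe]
    _ = ∫ x, 𝓕 ((𝓕⁻ φ : 𝓢(V, ℂ)) : V → ℂ) x • f x :=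
      (integral_fourier_smul_eq_integral_smul_fourier (𝓕⁻ φ).integrable hf).symm
    _ = ∫ x, g x • f x := by
      rw [← SchwartzMap.fourier_coe, FourierTransform.fourier_fourierInv_eq]
      simp only [hφ]

lemma memLp_top_of_integrable_fourier {f : V → E} (hf : Integrable f)
    (hf' : Integrable (𝓕 f)) : MemLp f ∞ :=
  (memLp_top_fourierInv hf').ae_eq (fourierInv_fourier_ae_eq hf hf')

end FourierL1

section RieszFourier

variable {V E : Type*} [NormedAddCommGroup V] [InnerProductSpace ℝ V] [FiniteDimensional ℝ V]
  [MeasurableSpace V] [BorelSpace V] [NormedAddCommGroup E] [NormedSpace ℂ E]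

lemma integrable_exp_neg_pi_norm_sq {t : ℝ} (ht : 0 < t) :
    Integrable fun v : V ↦ ((exp (-(π * ‖v‖ ^ 2 * t)) : ℝ) : ℂ) := by
  have hre : 0 < ((π * t : ℝ) : ℂ).re := by rw [Complex.ofReal_re]; positivity
  convert GaussianFourier.integrable_cexp_neg_mul_sq_norm_add (V := V) hre 0 0 using 2 with v
  push_cast
  simp only [zero_mul, add_zero]
  ring_nf

lemma fourier_exp_neg_pi_norm_sq {t : ℝ} (ht : 0 < t) (w : V) :
    𝓕 (fun v : V ↦ ((exp (-(π * ‖v‖ ^ 2 * t)) : ℝ) : ℂ)) w =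
      ((t ^ (-(finrank ℝ V / 2 : ℝ)) * exp (-(π * ‖w‖ ^ 2 * t⁻¹)) : ℝ) : ℂ) := by
  have hre : 0 < ((π * t : ℝ) : ℂ).re := by rw [Complex.ofReal_re]; positivity
  have hdiv : (π : ℂ) / ((π * t : ℝ) : ℂ) = ((t⁻¹ : ℝ) : ℂ) := by push_cast; field_simp
  calc
    _ = 𝓕 (fun v : V ↦ Complex.exp (-((π * t : ℝ) : ℂ) * ‖v‖ ^ 2)) w :=
      congrArg (fun φ : V → ℂ ↦ 𝓕 φ w) (funext fun v ↦ by push_cast; ring_nf)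
    _ = ((t⁻¹ : ℝ) : ℂ) ^ ((finrank ℝ V / 2 : ℝ) : ℂ) *
        Complex.exp (-π ^ 2 * ‖w‖ ^ 2 / ((π * t : ℝ) : ℂ)) := by
      rw [fourier_gaussian_innerProductSpace hre, hdiv]
      push_cast
      rfl
    _ = _ := by
      rw [← Complex.ofReal_cpow (by positivity), rpow_neg ht.le, inv_rpow ht.le]
      push_cast
      congr 2
      field_simp

variable [CompleteSpace E]

lemma integral_gaussian_smul_eq_fourier {f : V → E} (hf : Integrable f) {t : ℝ} (ht : 0 < t) :
    ∫ y, exp (-(π * ‖y‖ ^ 2 * t⁻¹)) • f y =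
      t ^ (finrank ℝ V / 2 : ℝ) • ∫ ξ, exp (-(π * ‖ξ‖ ^ 2 * t)) • 𝓕 f ξ := by
  have key := integral_fourier_smul_eq_integral_smul_fourier
    (integrable_exp_neg_pi_norm_sq (V := V) ht) hf
  simp only [fourier_exp_neg_pi_norm_sq ht, Complex.coe_smul, mul_smul, integral_smul] at key
  rw [← key, smul_smul, ← rpow_add ht, add_neg_cancel, rpow_zero, one_smul]

lemma integral_rpow_smul_comp_inv_Ioi {F : Type*} [NormedAddCommGroup F] [NormedSpace ℝ F]
    (Φ : ℝ → F) (b : ℝ) :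
    ∫ t in Ioi (0 : ℝ), t ^ (-b - 1) • Φ t⁻¹ = ∫ t in Ioi (0 : ℝ), t ^ (b - 1) • Φ t := by
  rw [← integral_comp_rpow_Ioi _ (neg_ne_zero.2 one_ne_zero : (-1 : ℝ) ≠ 0)]
  refine setIntegral_congr_fun measurableSet_Ioi fun t (ht : 0 < t) ↦ ?_
  simp only [abs_neg, abs_one, one_mul, rpow_neg_one, smul_smul]
  rw [inv_rpow ht.le, ← rpow_neg ht.le, ← rpow_add ht, inv_inv]
  ring_nf

/-- In distributional terms: `‖·‖ ^ (-a)` and `‖·‖ ^ (-(finrank ℝ V - a))` are Fourier transforms of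
each other, up to the Gamma factors. -/
lemma integral_norm_rpow_neg_smul_eq_integral_fourier {f : V → E} (hf : Integrable f)
    (hf' : Integrable (𝓕 f)) {a : ℝ} (ha : 0 < a) (had : a < finrank ℝ V) :
    (Gamma (a / 2) * π ^ (-(a / 2))) • ∫ y, ‖y‖ ^ (-a) • f y =
      (Gamma ((finrank ℝ V - a) / 2) * π ^ (-((finrank ℝ V - a) / 2))) •
        ∫ ξ, ‖ξ‖ ^ (-(finrank ℝ V - a)) • 𝓕 f ξ := by
  set d : ℝ := (finrank ℝ V : ℝ) with hd
  calc
    _ = ∫ t in Ioi (0 : ℝ), t ^ (a / 2 - 1) • ∫ y, exp (-(π * ‖y‖ ^ 2 * t)) • f y :=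
      (integral_rpow_smul_integral_gaussian_smul hf
        (memLp_top_of_integrable_fourier hf hf') ha had).symm
    _ = ∫ t in Ioi (0 : ℝ), t ^ (-(a / 2) - 1) • ∫ y, exp (-(π * ‖y‖ ^ 2 * t⁻¹)) • f y := by
      rw [← integral_rpow_smul_comp_inv_Ioi]
    _ = ∫ t in Ioi (0 : ℝ), t ^ ((d - a) / 2 - 1) • ∫ ξ, exp (-(π * ‖ξ‖ ^ 2 * t)) • 𝓕 f ξ := by
      refine setIntegral_congr_fun measurableSet_Ioi fun t (ht : 0 < t) ↦ ?_
      rw [integral_gaussian_smul_eq_fourier hf ht, smul_smul, ← rpow_add ht, ← hd]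
      ring_nf
    _ = _ :=
      integral_rpow_smul_integral_gaussian_smul hf' (memLp_top_fourier hf) (sub_pos.2 had)
        (by linarith)

end RieszFourier

section RieszPotential

variable {n : ℕ}

lemma one_div_gammaC (β : ℝ) :
    1 / gammaC n β = (2 * π) ^ (-β) * (Gamma ((n - β) / 2) * π ^ (-((n - β) / 2))) /
      (Gamma (β / 2) * π ^ (-(β / 2))) := by
  have hn : π ^ ((n : ℝ) / 2) = π ^ ((n - β) / 2) * π ^ (β / 2) := by
    rw [← rpow_add pi_pos]; ring_nf
  have hpi : π ^ β = π ^ (β / 2) * π ^ (β / 2) := by rw [← rpow_add pi_pos]; ring_nf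
  rw [gammaC, mul_rpow (by positivity) (by positivity), rpow_neg pi_pos.le, rpow_neg pi_pos.le,
    rpow_neg pi_pos.le, rpow_neg zero_le_two, hn, hpi]
  field_simp

lemma rieszPot_eq_fourierInv {β : ℝ} (hβ : 0 < β) (hβn : β < n) {g : Rn n → ℂ}
    (hg : Integrable g) (hg' : Integrable (𝓕 g)) (x : Rn n) :
    rieszPot n β g x = 𝓕⁻ (fun ξ ↦ (((2 * π) ^ (-β) * ‖ξ‖ ^ (-β) : ℝ) : ℂ) * 𝓕 g ξ) x := by
  have hshift : 𝓕 (fun y ↦ g (y + x)) = fun ξ ↦ 𝐞 ⟪x, ξ⟫ • 𝓕 g ξ :=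
    funext (fourier_comp_add_right g x)
  have hshift' : Integrable (𝓕 fun y ↦ g (y + x)) := by
    simpa [hshift, real_inner_comm] using (fourierIntegral_convergent_iff (-x)).2 hg'
  have key := integral_norm_rpow_neg_smul_eq_integral_fourier (hg.comp_add_right x) hshift'
    (a := n - β) (by linarith) (by rw [finrank_euclideanSpace_fin]; linarith)
  simp only [finrank_euclideanSpace_fin, sub_sub_cancel, hshift] at key
  calc
    rieszPot n β g x = (1 / gammaC n β) • ∫ y, ‖y‖ ^ (-(n - β)) • g (y + x) := by
      rw [rieszPot, ← Complex.real_smul, ← integral_add_right_eq_self _ x]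
      congr 2 with y
      rw [sub_add_cancel_right, norm_neg, rpow_neg (norm_nonneg y), Complex.real_smul,
        Complex.ofReal_inv, div_eq_inv_mul]
    _ = (2 * π) ^ (-β) • ∫ ξ, ‖ξ‖ ^ (-β) • 𝐞 ⟪x, ξ⟫ • 𝓕 g ξ := by
      rw [one_div_gammaC, mul_div_right_comm, mul_smul, key, smul_smul,
        div_mul_cancel₀ _ (by positivity)]
    _ = _ := by
      rw [fourierInv_eq, ← integral_smul]
      congr 1 with ξ
      rw [real_inner_comm, smul_smul, smul_comm, ← Complex.real_smul]

end RieszPotential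

section Dilation

variable {n : ℕ} {α : Rn n}

lemma sin_ne_zero_of_notPiZ (hα : notPiZ α) (k : Fin n) : sin (α k) ≠ 0 :=
  sin_ne_zero_iff.2 fun m ↦ (hα k m).symm

lemma prod_abs_sin_pos (hα : notPiZ α) : 0 < ∏ k, |sin (α k)| :=
  Finset.prod_pos fun k _ ↦ abs_pos.2 (sin_ne_zero_of_notPiZ hα k)

/-- The dilation `u ↦ ũ` as a linear map. -/
def tildeLin (α : Rn n) : Rn n →ₗ[ℝ] Rn n :=
  Matrix.toEuclideanLin (Matrix.diagonal fun k ↦ (sin (α k))⁻¹)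

lemma coe_tildeLin (α : Rn n) : ⇑(tildeLin α) = tilde α := by
  ext u k
  simp [tildeLin, tilde, Matrix.mulVec_diagonal, div_eq_inv_mul]

lemma det_tildeLin (α : Rn n) : LinearMap.det (tildeLin α) = (∏ k, sin (α k))⁻¹ := by
  simp [tildeLin]

lemma det_tildeLin_ne_zero (hα : notPiZ α) : LinearMap.det (tildeLin α) ≠ 0 := by
  rw [det_tildeLin]
  exact inv_ne_zero (Finset.prod_ne_zero_iff.2 fun k _ ↦ sin_ne_zero_of_notPiZ hα k)

lemma measurableEmbedding_tilde (hα : notPiZ α) : MeasurableEmbedding (tilde α) :=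
  coe_tildeLin α ▸ ((tildeLin α).equivOfDetNeZero
    (det_tildeLin_ne_zero hα)).toContinuousLinearEquiv.toHomeomorph.measurableEmbedding

lemma map_tilde_volume (hα : notPiZ α) :
    Measure.map (tilde α) volume = ENNReal.ofReal (∏ k, |sin (α k)|) • volume := by
  rw [← coe_tildeLin, Measure.map_linearMap_addHaar_eq_smul_addHaar _ (det_tildeLin_ne_zero hα),
    det_tildeLin, inv_inv, Finset.abs_prod]

lemma integrable_comp_tilde_iff {E : Type*} [NormedAddCommGroup E] (hα : notPiZ α)
    {F : Rn n → E} : Integrable (fun u ↦ F (tilde α u)) ↔ Integrable F :=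
  calc
    _ ↔ Integrable F (Measure.map (tilde α) volume) :=
      (measurableEmbedding_tilde hα).integrable_map_iff.symm
    _ ↔ _ := by
      rw [map_tilde_volume hα, integrable_smul_measure
        (ENNReal.ofReal_pos.2 (prod_abs_sin_pos hα)).ne' ENNReal.ofReal_ne_top]

lemma integral_comp_tilde {E : Type*} [NormedAddCommGroup E] [NormedSpace ℝ E] (hα : notPiZ α)
    (F : Rn n → E) : ∫ u, F (tilde α u) = (∏ k, |sin (α k)|) • ∫ v, F v := by
  rw [← (measurableEmbedding_tilde hα).integral_map, map_tilde_volume hα,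
    integral_smul_measure, ENNReal.toReal_ofReal (prod_abs_sin_pos hα).le]

lemma inner_tilde_neg (α u x : Rn n) : ⟪u, tilde (-α) x⟫ = -⟪tilde α u, x⟫ := by
  simp only [PiLp.inner_apply, tilde, ← Finset.sum_neg_distrib]
  refine Finset.sum_congr rfl fun k _ ↦ ?_
  simp only [PiLp.neg_apply, sin_neg, div_neg, PiLp.continuousLinearEquiv_symm_apply,
    RCLike.inner_apply, ringHom_apply, neg_mul, map_div₀, neg_inj]
  ring

lemma fourier_comp_tilde {E : Type*} [NormedAddCommGroup E] [NormedSpace ℂ E] (hα : notPiZ α)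
    (G : Rn n → E) (x : Rn n) :
    𝓕 (fun u ↦ G (tilde α u)) (tilde (-α) x) = (∏ k, |sin (α k)|) • 𝓕⁻ G x := by
  simp only [fourier_eq, inner_tilde_neg, neg_neg]
  rw [integral_comp_tilde hα fun v ↦ 𝐞 ⟪v, x⟫ • G v, fourierInv_eq]

end Dilation

section Chirp

variable {n : ℕ}

lemma chirp_mul_chirp_neg (α x : Rn n) : chirp α x * chirp (-α) x = 1 := by
  rw [chirp, chirp, ← Complex.exp_add, ← Complex.exp_zero]
  congr 1
  simp [cot_eq_cos_div_sin, div_neg, neg_div]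

lemma chirp_eq_cexp_ofReal_mul_I (α x : Rn n) :
    chirp α x = Complex.exp ((2 * π * ∑ k, cot (α k) / 2 * x k ^ 2 : ℝ) * Complex.I) := by
  rw [chirp]
  push_cast
  ring_nf

lemma norm_chirp (α x : Rn n) : ‖chirp α x‖ = 1 := by
  rw [chirp_eq_cexp_ofReal_mul_I, Complex.norm_exp_ofReal_mul_I]

lemma iteratedDeriv_cexp_ofReal_mul_I (m : ℕ) :
    iteratedDeriv m (fun t : ℝ ↦ Complex.exp (t * Complex.I)) =
      fun t : ℝ ↦ Complex.I ^ m * Complex.exp (t * Complex.I) := by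
  induction m with
  | zero => simp
  | succ m ih =>
    rw [iteratedDeriv_succ, ih]
    ext t
    have hderiv : HasDerivAt (fun t : ℝ ↦ Complex.exp (t * Complex.I))
        (Complex.exp (t * Complex.I) * (1 * Complex.I)) t :=
      ((hasDerivAt_id t).ofReal_comp.mul_const Complex.I).cexp
    rw [(hderiv.const_mul (Complex.I ^ m)).deriv]
    ring

lemma hasTemperateGrowth_cexp_ofReal_mul_I :
    (fun t : ℝ ↦ Complex.exp (t * Complex.I)).HasTemperateGrowth := by
  refine ⟨(Complex.ofRealCLM.contDiff.mul contDiff_const).cexp, fun m ↦ ⟨0, 1, fun t ↦ ?_⟩⟩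
  rw [norm_iteratedFDeriv_eq_norm_iteratedDeriv, iteratedDeriv_cexp_ofReal_mul_I]
  simp [Complex.norm_exp_ofReal_mul_I]

lemma hasTemperateGrowth_chirp (α : Rn n) : (chirp α).HasTemperateGrowth := by
  have hphase : (fun x : Rn n ↦ 2 * π * ∑ k, cot (α k) / 2 * x k ^ 2).HasTemperateGrowth :=
    (Function.HasTemperateGrowth.const _).fun_mul <| Function.HasTemperateGrowth.sum fun k _ ↦
      (Function.HasTemperateGrowth.const _).fun_mul <|
        (EuclideanSpace.proj (𝕜 := ℝ) k).hasTemperateGrowth.fun_pow 2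
  exact funext (chirp_eq_cexp_ofReal_mul_I α) ▸ hasTemperateGrowth_cexp_ofReal_mul_I.comp hphase

lemma continuous_chirp (α : Rn n) : Continuous (chirp α) :=
  (hasTemperateGrowth_chirp α).1.continuous

lemma integrable_chirp_mul_iff (α : Rn n) {F : Rn n → ℂ} :
    Integrable (fun x ↦ chirp α x * F x) ↔ Integrable F := by
  have hmul (γ : Rn n) {G : Rn n → ℂ} (hG : Integrable G) :
      Integrable fun x ↦ chirp γ x * G x :=
    hG.bdd_mul (c := 1) (continuous_chirp γ).aestronglyMeasurable
      (.of_forall fun x ↦ (norm_chirp γ x).le)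
  have hcancel (x : Rn n) : chirp (-α) x * (chirp α x * F x) = F x := by
    linear_combination F x * chirp_mul_chirp_neg α x
  exact ⟨fun h ↦ by simpa only [hcancel] using hmul (-α) h, hmul α⟩

lemma rieszPotChirp_eq_chirp_mul_rieszPot (α : Rn n) (β : ℝ) (f : Rn n → ℂ) (x : Rn n) :
    rieszPotChirp α β f x = chirp (-α) x * rieszPot n β (fun y ↦ chirp α y * f y) x := by
  simp only [rieszPotChirp, rieszPot, mul_comm (f _)]
  ring

end Chirp

section FractionalFourier

variable {n : ℕ} {α : Rn n}

lemma cpow_half_mul_conj_cpow_half {z : ℂ} (hz : z.arg ≠ π) :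
    z ^ (1 / 2 : ℂ) * (starRingEnd ℂ z) ^ (1 / 2 : ℂ) = ‖z‖ := by
  have hhalf : (1 / 2 : ℂ) = ((1 / 2 : ℝ) : ℂ) := by push_cast; rfl
  rw [hhalf, Complex.conj_cpow _ _ hz, Complex.conj_ofReal, Complex.mul_conj,
    Complex.normSq_eq_norm_sq, Complex.norm_cpow_real, ← rpow_mul_natCast (norm_nonneg z)]
  norm_num

lemma norm_one_sub_I_mul_ofReal (c : ℝ) : ‖1 - Complex.I * (c : ℂ)‖ = √(1 + c ^ 2) := by
  simp [Complex.norm_eq_sqrt_sq_add_sq]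

lemma sqrt_one_add_cot_sq {a : ℝ} (ha : sin a ≠ 0) : √(1 + cot a ^ 2) = |sin a|⁻¹ := by
  rw [sqrt_eq_iff_eq_sq (by positivity) (by positivity), inv_pow, sq_abs, cot_eq_cos_div_sin]
  field_simp
  exact sin_sq_add_cos_sq a

lemma cpow_half_one_sub_I_mul_mul_neg (c : ℝ) :
    (1 - Complex.I * (c : ℂ)) ^ (1 / 2 : ℂ) * (1 - Complex.I * ((-c : ℝ) : ℂ)) ^ (1 / 2 : ℂ) =
      (√(1 + c ^ 2) : ℝ) := by
  have harg : (1 - Complex.I * (c : ℂ)).arg ≠ π := fun h ↦ by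
    have hre := (Complex.arg_eq_pi_iff.1 h).1
    norm_num at hre
  have hconj : 1 - Complex.I * ((-c : ℝ) : ℂ) = starRingEnd ℂ (1 - Complex.I * (c : ℂ)) := by
    simp
  rw [hconj, cpow_half_mul_conj_cpow_half harg, norm_one_sub_I_mul_ofReal]

lemma cConst_mul_cConst_neg (hα : notPiZ α) :
    cConst α * cConst (-α) * ((∏ k, |sin (α k)| : ℝ) : ℂ) = 1 := by
  rw [cConst, cConst, ← Finset.prod_mul_distrib, Complex.ofReal_prod, ← Finset.prod_mul_distrib]
  refine Finset.prod_eq_one fun k _ ↦ ?_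
  have hsin : sin (α k) ≠ 0 := sin_ne_zero_of_notPiZ hα k
  have hcot : cot ((-α) k) = -cot (α k) := by simp [cot_eq_cos_div_sin, div_neg]
  rw [hcot, cpow_half_one_sub_I_mul_mul_neg, sqrt_one_add_cot_sq hsin, ← Complex.ofReal_mul,
    inv_mul_cancel₀ (abs_ne_zero.2 hsin), Complex.ofReal_one]

lemma frftKernel_eq_fourierChar (α x u : Rn n) :
    frftKernel α x u = cConst α * chirp α u * 𝐞 (-⟪x, tilde α u⟫) * chirp α x := by
  rw [frftKernel, Finset.prod_mul_distrib, ← Complex.exp_sum, cConst, chirp, chirp,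
    fourierChar_apply, mul_assoc (∏ k, _), mul_assoc (∏ k, _), ← Complex.exp_add,
    ← Complex.exp_add]
  congr 2
  simp only [PiLp.inner_apply, tilde]
  push_cast
  simp only [Finset.mul_sum, Finset.sum_mul, ← Finset.sum_add_distrib, ← Finset.sum_neg_distrib]
  refine Finset.sum_congr rfl fun k _ ↦ ?_
  simp only [PiLp.continuousLinearEquiv_symm_apply, RCLike.inner_apply, ringHom_apply,
    Complex.ofReal_mul, Complex.ofReal_div, Complex.ofReal_sin, mul_neg, neg_mul]
  ring

lemma frft_eq_fourier (α : Rn n) (f : Rn n → ℂ) (u : Rn n) :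
    frft α f u = cConst α * chirp α u * 𝓕 (fun x ↦ chirp α x * f x) (tilde α u) := by
  rw [frft, fourier_eq, ← integral_const_mul]
  congr 1 with x
  rw [frftKernel_eq_fourierChar, Circle.smul_def, smul_eq_mul]
  ring

lemma integrable_frft_iff (hα : notPiZ α) {f : Rn n → ℂ} :
    Integrable (frft α f) ↔ Integrable (𝓕 fun x ↦ chirp α x * f x) := by
  have hc : cConst α ≠ 0 :=
    left_ne_zero_of_mul (left_ne_zero_of_mul_eq_one (cConst_mul_cConst_neg hα))
  rw [funext (frft_eq_fourier α f)]
  simp only [mul_assoc]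
  rw [integrable_const_mul_iff hc.isUnit, integrable_chirp_mul_iff, integrable_comp_tilde_iff hα]

lemma integrable_frft (hα : notPiZ α) (f : 𝓢(Rn n, ℂ)) : Integrable (frft α f) := by
  rw [integrable_frft_iff hα]
  have hmul : (fun x ↦ chirp α x * f x) = smulLeftCLM ℂ (chirp α) f := by
    ext x
    rw [smulLeftCLM_apply_apply (hasTemperateGrowth_chirp α), smul_eq_mul]
  rw [hmul, ← SchwartzMap.fourier_coe]
  exact (𝓕 (smulLeftCLM ℂ (chirp α) f)).integrable

lemma frft_neg_mul_comp_tilde (hα : notPiZ α) (G : Rn n → ℂ) (x : Rn n) :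
    frft (-α) (fun u ↦ cConst α * chirp α u * G (tilde α u)) x = chirp (-α) x * 𝓕⁻ G x := by
  have hcancel : (fun u ↦ chirp (-α) u * (cConst α * chirp α u * G (tilde α u))) =
      cConst α • fun u ↦ G (tilde α u) := by
    ext u
    rw [Pi.smul_apply, smul_eq_mul]
    linear_combination cConst α * G (tilde α u) * chirp_mul_chirp_neg α u
  have hsmul : 𝓕 (cConst α • fun u ↦ G (tilde α u)) = cConst α • 𝓕 fun u ↦ G (tilde α u) :=
    VectorFourier.fourierIntegral_const_smul ..
  rw [frft_eq_fourier, hcancel, hsmul, Pi.smul_apply, fourier_comp_tilde hα, smul_eq_mul,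
    Complex.real_smul]
  linear_combination chirp (-α) x * 𝓕⁻ G x * cConst_mul_cConst_neg hα

theorem rieszPotChirp_eq_frft_symbol_general (hα : notPiZ α) {β : ℝ} (hβ : 0 < β)
    (hβn : β < n) {f : Rn n → ℂ} (hf : Integrable f) (hf' : Integrable (frft α f)) :
    rieszPotChirp α β f = frft (-α)
      (fun u ↦ (((2 * π) ^ (-β) * ‖tilde α u‖ ^ (-β) : ℝ) : ℂ) * frft α f u) := by
  ext x
  rw [rieszPotChirp_eq_chirp_mul_rieszPot, rieszPot_eq_fourierInv hβ hβn
    ((integrable_chirp_mul_iff α).2 hf) ((integrable_frft_iff hα).1 hf'),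
    ← frft_neg_mul_comp_tilde hα]
  congr 1 with u
  rw [frft_eq_fourier α f]
  ring

end FractionalFourier

/-- `I_β^α f = F_{-α}(m_β^α ⋅ F_α f)` as tempered distributions. -/
theorem rieszPotChirp_eq_frft_symbol {n : ℕ} (α : Rn n) (hα : notPiZ α)
    (β : ℝ) (hβ : 0 < β) (hβn : β < n) (f : 𝓢(Rn n, ℂ)) (φ : 𝓢(Rn n, ℂ)) :
    ∫ x, rieszPotChirp α β (⇑f) x * φ x
      = ∫ x, frft (-α)
          (fun u => (((2 * π) ^ (-β) * ‖tilde α u‖ ^ (-β) : ℝ) : ℂ) * frft α (⇑f) u) x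
          * φ x := by
  rw [rieszPotChirp_eq_frft_symbol_general hα hβ hβn f.integrable (integrable_frft hα f)]
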